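/- arXiv:1602.01749 — 2 statements merged into one kernel-verified Lean document; each statement's English description precedes it below -/
import Mathlib

section
/- Let p and q be coprime integers with q > 0, p ≠ 0, and p/q ∉ {1, −1, 2, −2}, and let σ ∈ PGL₂(ℚ) be given by σ(z) = qz/(pz − q) (an involution). Then for every algebraic number α with α ≠ 0, h(α) + h(σ(α)) ≥ log max(||p| − q|, q). Moreover, equality holds for α = 1 if p > 0, and for α = −1 if p < 0. -/
/- For a nonzero `f ∈ ℤ[X]`, the Mahler measure `M(f) = |a_n| ∏ max(|α_i|,1)`. -/
open Polynomial

noncomputable def mahlerMeasure (f : ℤ[X]) : ℝ :=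
  |(f.leadingCoeff : ℝ)| *
    (((f.map (Int.castRingHom ℂ)).roots).map (fun z => max ‖z‖ 1)).prod

/-- The primitive minimal polynomial over `ℤ` of an algebraic number. -/
noncomputable def intMinpoly (α : ℂ) : ℤ[X] :=
  (IsLocalization.integerNormalization (nonZeroDivisors ℤ) (minpoly ℚ α)).primPart

/-- The absolute logarithmic Weil height `h(α) = (1/n) log M(f)`. -/
noncomputable def height (α : ℂ) : ℝ :=
  Real.log (mahlerMeasure (intMinpoly α)) / (minpoly ℚ α).natDegree



/-- Dividing out a linear factor preserves integrality of all coefficients. -/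
lemma integral_coeff_of_linear_mul (a : ℂ) (n : ℕ) : ∀ Q : ℂ[X], Q.natDegree ≤ n →
    (∀ i, IsIntegral ℤ (((X - C a) * Q).coeff i)) → ∀ i, IsIntegral ℤ (Q.coeff i) := by
  have key : ∀ Q : ℂ[X], (∀ i, IsIntegral ℤ (((X - C a) * Q).coeff i)) →
      IsIntegral ℤ Q.leadingCoeff ∧ IsIntegral ℤ (Q.leadingCoeff * a) := by
    intro Q hQ
    have hlc : ((X - C a) * Q).leadingCoeff = Q.leadingCoeff := by
      rw [leadingCoeff_mul, leadingCoeff_X_sub_C, one_mul]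
    refine ⟨by rw [← hlc]; exact hQ _, ?_⟩
    have hl : (X - C a) * Q ∈ lifts (algebraMap (integralClosure ℤ ℂ) ℂ) := by
      rw [lifts_iff_coeff_lifts]
      intro i
      exact ⟨⟨_, hQ i⟩, rfl⟩
    obtain ⟨P, hP⟩ := (mem_lifts _).1 hl
    have hinj : Function.Injective (algebraMap (integralClosure ℤ ℂ) ℂ) :=
      Subtype.val_injective
    have h0 : aeval a P = 0 := by
      rw [aeval_def, ← eval_map, hP]; simp
    have h1 := isIntegral_leadingCoeff_smul P a h0
    have h2 : P.leadingCoeff • a = Q.leadingCoeff * a := by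
      rw [← hlc, ← hP, leadingCoeff_map_of_injective hinj, Algebra.smul_def]
    rw [h2] at h1
    exact isIntegral_trans _ h1
  induction n with
  | zero =>
    intro Q hd hQ i
    obtain ⟨h1, -⟩ := key Q hQ
    rcases Nat.eq_zero_or_pos i with rfl | hi
    · have : Q.natDegree = 0 := by omega
      rwa [leadingCoeff, this] at h1
    · rw [coeff_eq_zero_of_natDegree_lt (by omega)]
      exact isIntegral_zero
  | succ n ih =>
    intro Q hd hQ i
    obtain ⟨h1, h2⟩ := key Q hQ
    have hm : ∀ i, IsIntegral ℤ ((monomial Q.natDegree Q.leadingCoeff).coeff i) := by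
      intro i
      rw [coeff_monomial]
      split_ifs
      · exact h1
      · exact isIntegral_zero
    have hsum := Q.eraseLead_add_monomial_natDegree_leadingCoeff
    rw [← hsum, coeff_add]
    refine IsIntegral.add (ih _ ?_ ?_ i) (hm i)
    · have := Q.eraseLead_natDegree_le
      omega
    · intro j
      have e : (X - C a) * Q.eraseLead = (X - C a) * Q -
          (X * monomial Q.natDegree Q.leadingCoeff
            - monomial Q.natDegree (Q.leadingCoeff * a)) := by
        have : monomial Q.natDegree (Q.leadingCoeff * a) =
          C a * monomial Q.natDegree Q.leadingCoeff := by
          rw [C_mul_monomial, mul_comm]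
        rw [this]
        nth_rewrite 2 [← hsum]
        ring
      rw [e, coeff_sub, coeff_sub]
      refine (hQ j).sub (IsIntegral.sub ?_ ?_)
      · rcases j with _ | j
        · simpa using isIntegral_zero
        · rw [coeff_X_mul]; exact hm j
      · rw [coeff_monomial]
        split_ifs
        · exact h2
        · exact isIntegral_zero

lemma integral_coeff_of_prod {ι : Type*} [DecidableEq ι] (x : ι → ℂ) (u : Finset ι) :
    ∀ Q : ℂ[X], (∀ i, IsIntegral ℤ ((Q * ∏ j ∈ u, (X - C (x j))).coeff i)) →
      ∀ i, IsIntegral ℤ (Q.coeff i) := by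
  induction u using Finset.induction with
  | empty => intro Q h; simpa using h
  | insert a s ha ih =>
    intro Q h
    refine integral_coeff_of_linear_mul (x a) _ Q le_rfl (ih _ ?_)
    intro i
    have := h i
    rw [Finset.prod_insert ha] at this
    convert this using 2
    ring

lemma integral_subprod {ι : Type*} [Fintype ι] [DecidableEq ι] (x : ι → ℂ) (F : ℤ[X])
    (A : ℤ) (hF : F.map (Int.castRingHom ℂ) = C (A : ℂ) * ∏ j, (X - C (x j)))
    (t : Finset ι) : IsIntegral ℤ ((A : ℂ) * ∏ j ∈ t, x j) := by
  have h := integral_coeff_of_prod x tᶜ (C (A : ℂ) * ∏ j ∈ t, (X - C (x j))) (by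
    intro i
    rw [mul_assoc, Finset.prod_mul_prod_compl, ← hF, coeff_map]
    exact isIntegral_algebraMap) 0
  rw [coeff_C_mul, coeff_zero_prod] at h
  simp only [coeff_sub, coeff_X_zero, coeff_C_zero, zero_sub, Finset.prod_neg] at h
  have h2 : IsIntegral ℤ ((-1 : ℂ) ^ t.card) := (isIntegral_one.neg).pow _
  have := h.mul h2
  have h3 : ((-1 : ℂ) ^ t.card) * (-1) ^ t.card = 1 := by
    rw [← mul_pow]; simp
  have h4 : (A : ℂ) * ∏ j ∈ t, x j =
      (A : ℂ) * ((-1) ^ t.card * ∏ j ∈ t, x j) * (-1) ^ t.card := by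
    linear_combination (-(A : ℂ) * (∏ j ∈ t, x j)) * h3
  rw [h4]
  exact this

lemma local_bound (r : ℝ) (x y : ℂ) (hx : x ≠ 0) (hy : y ≠ 0) (z : ℂ) (hz : ‖z‖ = r)
    (h : z * (x * y) = x + y) :
    max 1 (r - 1) * (‖x‖ * ‖y‖) ≤ max ‖x‖ 1 * max ‖y‖ 1 := by
  have hx' : 0 < ‖x‖ := norm_pos_iff.2 hx
  have hy' : 0 < ‖y‖ := norm_pos_iff.2 hy
  have h1 : r * (‖x‖ * ‖y‖) ≤ ‖x‖ + ‖y‖ := by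
    rw [← hz, ← norm_mul, ← norm_mul, h]; exact norm_add_le _ _
  generalize ‖x‖ = a at *
  generalize ‖y‖ = b at *
  have ha1 := le_max_left a 1
  have ha2 := le_max_right a 1
  have hb1 := le_max_left b 1
  have hb2 := le_max_right b 1
  rw [max_mul_of_nonneg _ _ (by positivity)]
  apply max_le
  · rw [one_mul]
    gcongr
  · have h3 : (r - 1) * (a * b) ≤ a + b - a * b := by linarith
    refine h3.trans ?_
    generalize max a 1 = u at *
    generalize max b 1 = v at *
    rcases le_total a 1 with h | h <;> rcases le_total b 1 with h' | h'
    · nlinarith [mul_nonneg (sub_nonneg.2 h) (sub_nonneg.2 h')]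
    · nlinarith [mul_nonneg (sub_nonneg.2 h) (sub_nonneg.2 h')]
    · nlinarith [mul_nonneg (sub_nonneg.2 h) (sub_nonneg.2 h')]
    · nlinarith [mul_nonneg (sub_nonneg.2 h) (sub_nonneg.2 h')]

lemma core_bound {ι : Type*} [Fintype ι] [DecidableEq ι] (p q : ℤ) (hpq : IsCoprime p q)
    (hq : 0 < q) (x y : ι → ℂ) (hx : ∀ i, x i ≠ 0) (hy : ∀ i, y i ≠ 0)
    (hxy : ∀ i, (p : ℂ) * (x i * y i) = q * (x i + y i)) (A B N N' : ℤ)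
    (hA : A ≠ 0) (hB : B ≠ 0) (hN : (A : ℂ) * ∏ i, x i = N) (hN' : (B : ℂ) * ∏ i, y i = N')
    (hAi : ∀ t : Finset ι, IsIntegral ℤ ((A : ℂ) * ∏ j ∈ t, x j))
    (hBi : ∀ t : Finset ι, IsIntegral ℤ ((B : ℂ) * ∏ j ∈ t, y j)) :
    ((max (|(|p| - q)|) q : ℤ) : ℝ) ^ Fintype.card ι ≤
      (|(A : ℝ)| * ∏ i, max ‖x i‖ 1) * (|(B : ℝ)| * ∏ i, max ‖y i‖ 1) := by
  set n := Fintype.card ι with hn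
  have hqC : (q : ℂ) ≠ 0 := by exact_mod_cast hq.ne'
  have hqR : (0 : ℝ) < q := by exact_mod_cast hq
  have hI : IsIntegral ℤ ((A : ℂ) * B * ∏ i, (x i + y i)) := by
    rw [Finset.prod_add, Finset.mul_sum]
    refine IsIntegral.sum _ fun t _ => ?_
    have := (hAi t).mul (hBi (Finset.univ \ t))
    convert this using 1
    ring
  have hE : (p : ℂ) ^ n * (N * N') = q ^ n * ((A : ℂ) * B * ∏ i, (x i + y i)) := by
    have : ∏ i, ((p : ℂ) * (x i * y i)) = ∏ i, ((q : ℂ) * (x i + y i)) :=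
      Finset.prod_congr rfl fun i _ => hxy i
    rw [Finset.prod_mul_distrib, Finset.prod_mul_distrib, Finset.prod_mul_distrib,
      Finset.prod_const, Finset.prod_const, Finset.card_univ, ← hn] at this
    rw [← hN, ← hN']
    linear_combination (A : ℂ) * B * this
  have hR : (A : ℂ) * B * ∏ i, (x i + y i) =
      algebraMap ℚ ℂ ((p : ℚ) ^ n * (N * N') / q ^ n) := by
    have : (q : ℂ) ^ n ≠ 0 := pow_ne_zero _ hqC
    simp
    rw [eq_div_iff this]
    linear_combination -hE
  rw [hR, isIntegral_algebraMap_iff (algebraMap ℚ ℂ).injective,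
    IsIntegrallyClosed.isIntegral_iff] at hI
  obtain ⟨m, hm⟩ := hI
  have hdiv : q ^ n ∣ N * N' := by
    have h1 : q ^ n ∣ p ^ n * (N * N') := by
      refine ⟨m, ?_⟩
      have : (q : ℚ) ^ n ≠ 0 := pow_ne_zero _ (by exact_mod_cast hq.ne')
      rw [eq_div_iff this] at hm
      simp at hm
      have h3 : p ^ n * (N * N') = m * q ^ n := by exact_mod_cast hm.symm
      linarith
    exact (hpq.symm.pow).dvd_of_dvd_mul_left h1
  have hAC : (A : ℂ) ≠ 0 := by exact_mod_cast hA
  have hBC : (B : ℂ) ≠ 0 := by exact_mod_cast hB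
  have hN0 : N ≠ 0 := by
    have : (N : ℂ) ≠ 0 := by
      rw [← hN]; exact mul_ne_zero hAC (Finset.prod_ne_zero_iff.2 fun i _ => hx i)
    exact_mod_cast this
  have hN0' : N' ≠ 0 := by
    have : (N' : ℂ) ≠ 0 := by
      rw [← hN']; exact mul_ne_zero hBC (Finset.prod_ne_zero_iff.2 fun i _ => hy i)
    exact_mod_cast this
  have hle : (q : ℝ) ^ n ≤ |(N : ℝ)| * |(N' : ℝ)| := by
    have h1 := Int.le_of_dvd (abs_pos.2 (mul_ne_zero hN0 hN0')) ((dvd_abs _ _).2 hdiv)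
    rw [abs_mul] at h1
    exact_mod_cast h1
  have hNn : |(N : ℝ)| = |(A : ℝ)| * ∏ i, ‖x i‖ := by
    have := congrArg norm hN
    rw [norm_mul, norm_prod, Complex.norm_intCast, Complex.norm_intCast] at this
    exact this.symm
  have hNn' : |(N' : ℝ)| = |(B : ℝ)| * ∏ i, ‖y i‖ := by
    have := congrArg norm hN'
    rw [norm_mul, norm_prod, Complex.norm_intCast, Complex.norm_intCast] at this
    exact this.symm
  set r : ℝ := |(p : ℝ)| / q with hr
  have hloc : ∀ i, max 1 (r - 1) * (‖x i‖ * ‖y i‖) ≤ max ‖x i‖ 1 * max ‖y i‖ 1 := by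
    intro i
    refine local_bound r (x i) (y i) (hx i) (hy i) ((p : ℂ) / q) ?_ ?_
    · rw [norm_div, Complex.norm_intCast, Complex.norm_intCast, abs_of_pos hqR]
    · rw [div_mul_eq_mul_div, hxy i]
      field_simp
  have hprod : (max 1 (r - 1)) ^ n * ((∏ i, ‖x i‖) * ∏ i, ‖y i‖) ≤
      (∏ i, max ‖x i‖ 1) * ∏ i, max ‖y i‖ 1 := by
    rw [← Finset.prod_mul_distrib, ← Finset.prod_mul_distrib, hn, ← Finset.card_univ,
      ← Finset.prod_const, ← Finset.prod_mul_distrib]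
    refine Finset.prod_le_prod (fun i _ => ?_) fun i _ => hloc i
    have : (0 : ℝ) < max 1 (r - 1) := lt_of_lt_of_le one_pos (le_max_left _ _)
    positivity
  have hmax : ((max (|(|p| - q)|) q : ℤ) : ℝ) ≤ q * max 1 (r - 1) := by
    rw [mul_max_of_nonneg _ _ hqR.le]
    have e : (q : ℝ) * (r - 1) = |(p : ℝ)| - q := by rw [hr]; field_simp
    rw [e, mul_one]
    push_cast
    have := abs_nonneg (p : ℝ)
    refine max_le ?_ (le_max_left _ _)
    rcases abs_cases (|(p : ℝ)| - q) with h | h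
    · rw [h.1]; exact le_max_right _ _
    · rw [h.1]; exact le_trans (by linarith) (le_max_left _ _)
  have hM0 : (0 : ℝ) ≤ ((max (|(|p| - q)|) q : ℤ) : ℝ) := by
    exact_mod_cast le_trans hq.le (le_max_right _ _)
  have hmp : (0 : ℝ) < max 1 (r - 1) := lt_of_lt_of_le one_pos (le_max_left _ _)
  calc _ ≤ (q * max 1 (r - 1)) ^ n := pow_le_pow_left₀ hM0 hmax n
    _ = q ^ n * max 1 (r - 1) ^ n := mul_pow _ _ _
    _ ≤ (|(N : ℝ)| * |(N' : ℝ)|) * max 1 (r - 1) ^ n := by gcongr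
    _ = |(A : ℝ)| * |(B : ℝ)| * (max 1 (r - 1) ^ n * ((∏ i, ‖x i‖) * ∏ i, ‖y i‖)) := by
        rw [hNn, hNn']; ring
    _ ≤ |(A : ℝ)| * |(B : ℝ)| * ((∏ i, max ‖x i‖ 1) * ∏ i, max ‖y i‖ 1) := by gcongr
    _ = _ := by ring

/-- The primitive integral minimal polynomial is a rational multiple of the minimal polynomial. -/
lemma intMinpoly_spec (α : ℂ) (hα : IsAlgebraic ℚ α) :
    (intMinpoly α).IsPrimitive ∧ ∃ c : ℚ, c ≠ 0 ∧
      (intMinpoly α).map (Int.castRingHom ℚ) = C c * minpoly ℚ α := by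
  refine ⟨isPrimitive_primPart _, ?_⟩
  have hm : minpoly ℚ α ≠ 0 := minpoly.ne_zero hα.isIntegral
  obtain ⟨b, hbm, hb⟩ := IsLocalization.integerNormalization_spec (nonZeroDivisors ℤ)
    (minpoly ℚ α)
  set G := IsLocalization.integerNormalization (nonZeroDivisors ℤ) (minpoly ℚ α) with hG
  have hG0 : G ≠ 0 := by
    intro h
    rw [hG, IsLocalization.integerNormalization_eq_zero_iff le_rfl] at h
    exact hm h
  have hc : G.content ≠ 0 := by rwa [Ne, content_eq_zero_iff]
  have hcQ : ((G.content : ℤ) : ℚ) ≠ 0 := by exact_mod_cast hc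
  have hbQ : (b : ℚ) ≠ 0 := by exact_mod_cast nonZeroDivisors.ne_zero hbm
  refine ⟨(b : ℚ) / (G.content : ℤ), div_ne_zero hbQ hcQ, ?_⟩
  have h1 : C ((G.content : ℤ) : ℚ) * (intMinpoly α).map (Int.castRingHom ℚ) =
      C (b : ℚ) * minpoly ℚ α := by
    have h2 := congrArg (Polynomial.map (Int.castRingHom ℚ)) G.eq_C_content_mul_primPart
    rw [Polynomial.map_mul, map_C] at h2
    have h3 : G.map (Int.castRingHom ℚ) = C (b : ℚ) * minpoly ℚ α := by
      rw [← algebraMap_int_eq, hb]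
      ext i
      simp
    rw [← h3, h2]
    rfl
  apply mul_left_cancel₀ (C_ne_zero.2 hcQ)
  rw [h1, ← mul_assoc, ← C_mul, mul_div_cancel₀ _ hcQ]

lemma height_data (K : IntermediateField ℚ ℂ) [FiniteDimensional ℚ K] (x : K)
    (hx : IntermediateField.adjoin ℚ {x} = ⊤) :
    ∃ A N : ℤ, A ≠ 0 ∧ (A : ℂ) * ∏ φ : K →ₐ[ℚ] ℂ, φ x = N ∧
      (∀ t : Finset (K →ₐ[ℚ] ℂ), IsIntegral ℤ ((A : ℂ) * ∏ φ ∈ t, φ x)) ∧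
      height (x : ℂ) = Real.log (|(A : ℝ)| * ∏ φ : K →ₐ[ℚ] ℂ, max ‖φ x‖ 1) /
        Fintype.card (K →ₐ[ℚ] ℂ) := by
  classical
  have hxint : IsIntegral ℚ x := Algebra.IsIntegral.isIntegral x
  have hmin : minpoly ℚ (x : ℂ) = minpoly ℚ x :=
    minpoly.algebraMap_eq (algebraMap K ℂ).injective x
  have halg : IsAlgebraic ℚ (x : ℂ) := by
    have : IsIntegral ℚ (x : ℂ) := hxint.map K.val
    exact this.isAlgebraic
  obtain ⟨-, c, hc, hF⟩ := intMinpoly_spec (x : ℂ) halg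
  set F := intMinpoly (x : ℂ) with hFdef
  rw [hmin] at hF
  have hroots : ((minpoly ℚ x).map (algebraMap ℚ ℂ)).roots =
      (Finset.univ : Finset (K →ₐ[ℚ] ℂ)).val.map (fun φ => φ x) := by
    have hinj : Function.Injective (fun φ : K →ₐ[ℚ] ℂ => φ x) := by
      intro φ ψ h
      ext z
      have hz : z ∈ IntermediateField.adjoin ℚ {x} := by rw [hx]; trivial
      induction hz using IntermediateField.adjoin_induction with
      | mem y hy => rw [Set.mem_singleton_iff.1 hy]; exact h
      | algebraMap y => rw [φ.commutes, ψ.commutes]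
      | add y z _ _ h1 h2 => rw [map_add, map_add, h1, h2]
      | mul y z _ _ h1 h2 => rw [map_mul, map_mul, h1, h2]
      | inv y _ h1 => rw [map_inv₀, map_inv₀, h1]
    have hnd : ((minpoly ℚ x).map (algebraMap ℚ ℂ)).roots.Nodup :=
      nodup_roots ((minpoly.irreducible hxint).separable.map)
    rw [Multiset.Nodup.ext hnd (Finset.univ.nodup.map hinj)]
    intro z
    have := Algebra.IsAlgebraic.range_eval_eq_rootSet_minpoly (F := ℚ) (K := K) ℂ x
    have h2 := Set.ext_iff.1 this z
    rw [rootSet, Finset.mem_coe, Multiset.mem_toFinset] at h2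
    rw [← aroots_def, ← h2]
    simp
  have hmapC : F.map (Int.castRingHom ℂ) =
      C (c : ℂ) * (minpoly ℚ x).map (algebraMap ℚ ℂ) := by
    have := congrArg (Polynomial.map (algebraMap ℚ ℂ)) hF
    rw [Polynomial.map_map, Polynomial.map_mul, map_C] at this
    have e : (algebraMap ℚ ℂ).comp (Int.castRingHom ℚ) = Int.castRingHom ℂ :=
      RingHom.ext_int _ _
    rw [e] at this
    rw [this]
    simp
  have hcC : (c : ℂ) ≠ 0 := by exact_mod_cast hc
  have hFroots : (F.map (Int.castRingHom ℂ)).roots =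
      (Finset.univ : Finset (K →ₐ[ℚ] ℂ)).val.map (fun φ => φ x) := by
    rw [hmapC, roots_C_mul _ hcC, hroots]
  have hlc : (F.map (Int.castRingHom ℂ)).leadingCoeff = (F.leadingCoeff : ℂ) :=
    leadingCoeff_map_of_injective (RingHom.injective_int _) _
  have hfac : F.map (Int.castRingHom ℂ) =
      C (F.leadingCoeff : ℂ) * ∏ φ : K →ₐ[ℚ] ℂ, (X - C (φ x)) := by
    have := (IsAlgClosed.splits (F.map (Int.castRingHom ℂ))).eq_prod_roots
    rw [hlc, hFroots, Multiset.map_map] at this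
    exact this
  have hF0 : F ≠ 0 := by
    intro h
    rw [h, Polynomial.map_zero] at hF
    exact mul_ne_zero (C_ne_zero.2 hc) (minpoly.ne_zero hxint) hF.symm
  refine ⟨F.leadingCoeff, (-1) ^ Fintype.card (K →ₐ[ℚ] ℂ) * F.coeff 0,
    leadingCoeff_ne_zero.2 hF0, ?_, fun t => integral_subprod _ F _ hfac t, ?_⟩
  · have := congrArg (fun P => coeff P 0) hfac
    simp only [coeff_map, coeff_C_mul, coeff_zero_prod, coeff_sub, coeff_X_zero, coeff_C_zero,
      zero_sub, Finset.prod_neg, Finset.card_univ, eq_intCast] at this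
    push_cast
    rw [this]
    have h1 : ((-1 : ℂ) ^ Fintype.card (K →ₐ[ℚ] ℂ)) * (-1) ^ Fintype.card (K →ₐ[ℚ] ℂ) = 1 := by
      rw [← mul_pow]; simp
    linear_combination (-(F.leadingCoeff : ℂ) * (∏ φ : K →ₐ[ℚ] ℂ, φ x)) * h1
  · have hcard : (minpoly ℚ (x : ℂ)).natDegree = Fintype.card (K →ₐ[ℚ] ℂ) := by
      rw [hmin, AlgHom.card, ← IntermediateField.adjoin.finrank hxint, hx,
        IntermediateField.finrank_top']
    rw [height, _root_.mahlerMeasure, hcard, ← hFdef, hFroots, Multiset.map_map]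
    rfl

lemma height_rat (a b : ℤ) (hb : b ≠ 0) (hab : IsCoprime a b) :
    height ((a : ℂ) / b) = Real.log (max |a| |b| : ℤ) := by
  have hbC : (b : ℂ) ≠ 0 := by exact_mod_cast hb
  have hbQ : (b : ℚ) ≠ 0 := by exact_mod_cast hb
  have e : (a : ℂ) / b = algebraMap ℚ ℂ ((a : ℚ) / b) := by simp
  have hmin : minpoly ℚ ((a : ℂ) / b) = X - C ((a : ℚ) / b) := by
    rw [e]; exact minpoly.eq_X_sub_C _ _
  obtain ⟨hprim, c, hc, hF⟩ := intMinpoly_spec ((a : ℂ) / b)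
    (by rw [e]; exact isAlgebraic_algebraMap _)
  rw [hmin] at hF
  rw [height, _root_.mahlerMeasure, hmin]
  set F := intMinpoly ((a : ℂ) / b)
  have hcb : ∃ k : ℤ, C k * (C b * X - C a) = F := by
    have h1 := congrArg (fun P => coeff P 1) hF
    have h0 := congrArg (fun P => coeff P 0) hF
    simp [coeff_X, coeff_C] at h1 h0
    have h2 : F.coeff 1 * a = - F.coeff 0 * b := by
      have : (F.coeff 1 : ℚ) * a = - F.coeff 0 * b := by
        rw [h0, h1]; field_simp
      exact_mod_cast this
    obtain ⟨k, hk⟩ : b ∣ F.coeff 1 :=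
      hab.symm.dvd_of_dvd_mul_right ⟨- F.coeff 0, by rw [h2]; ring⟩
    have hk0 : F.coeff 0 = - (k * a) := by
      apply mul_right_cancel₀ hb
      rw [hk] at h2
      linear_combination h2
    refine ⟨k, ?_⟩
    have hdeg : F.natDegree ≤ 1 := by
      rw [← natDegree_map_eq_of_injective (RingHom.injective_int (Int.castRingHom ℚ)), hF,
        natDegree_C_mul hc, natDegree_X_sub_C]
    rw [eq_X_add_C_of_natDegree_le_one hdeg, hk, hk0]
    simp
    ring
  obtain ⟨k, hk⟩ := hcb
  have hku : IsUnit k := hprim k ⟨_, hk.symm⟩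
  have hk1 : |k| = 1 := Int.isUnit_iff_abs_eq.1 hku
  have hk0 : k ≠ 0 := hku.ne_zero
  have hlc : F.leadingCoeff = k * b := by
    rw [← hk, leadingCoeff_mul, leadingCoeff_C, sub_eq_add_neg, ← C_neg,
      leadingCoeff_linear hb]
  have hroots : (F.map (Int.castRingHom ℂ)).roots = {(a : ℂ) / b} := by
    have : F.map (Int.castRingHom ℂ) = C ((k : ℂ) * b) * (X - C ((a : ℂ) / b)) := by
      rw [← hk]
      simp [mul_sub]
      have : (b : ℂ) * (a / b) = a := by field_simp
      rw [mul_assoc (k : ℂ[X]), mul_assoc (k : ℂ[X])]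
      have h3 : (b : ℂ[X]) * C ((a : ℂ) / b) = (a : ℂ[X]) := by
        rw [← map_intCast (C : ℂ →+* ℂ[X]) b, ← C_mul, this]; simp
      rw [h3]
    rw [this, roots_C_mul _ (mul_ne_zero (by exact_mod_cast hk0) hbC), roots_X_sub_C]
  rw [hroots, hlc, natDegree_X_sub_C]
  simp only [Multiset.map_singleton, Multiset.prod_singleton, Nat.cast_one, div_one]
  congr 1
  rw [norm_div, Complex.norm_intCast, Complex.norm_intCast]
  push_cast
  have hk1' : |(k : ℝ)| = 1 := by exact_mod_cast hk1
  have hbR : 0 < |(b : ℝ)| := abs_pos.2 (by exact_mod_cast hb)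
  rw [abs_mul, hk1', one_mul, mul_max_of_nonneg _ _ hbR.le, mul_one, mul_div_cancel₀ _ hbR.ne']

lemma adjoin_gen_eq_top_aux {F E : Type*} [Field F] [Field E] [Algebra F E] (α : E) :
    IntermediateField.adjoin F {IntermediateField.AdjoinSimple.gen F α} = ⊤ := by
  apply IntermediateField.lift_injective (IntermediateField.adjoin F {α})
  rw [IntermediateField.lift_adjoin_simple, IntermediateField.lift_top]
  rfl

lemma height_pos_part (p q : ℤ) (hpq : IsCoprime p q) (hq : 0 < q)
    (α : ℂ) (hα : IsAlgebraic ℚ α) (h0 : α ≠ 0) (h1 : (p : ℂ) * α - q ≠ 0) :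
    height α + height ((q : ℂ) * α / ((p : ℂ) * α - (q : ℂ)))
        ≥ Real.log (max (|(|p| - q)| : ℤ) (q : ℤ) : ℤ) := by
  classical
  set K : IntermediateField ℚ ℂ := IntermediateField.adjoin ℚ {α} with hK
  have hfd : FiniteDimensional ℚ K := IntermediateField.adjoin.finiteDimensional hα.isIntegral
  let a : K := IntermediateField.AdjoinSimple.gen ℚ α
  have ha : (a : ℂ) = α := rfl
  let b : K := (q : K) * a / ((p : K) * a - q)
  have hb : (b : ℂ) = (q : ℂ) * α / ((p : ℂ) * α - (q : ℂ)) := by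
    simp [b, ha]
  have hqK : (q : K) ≠ 0 := by exact_mod_cast hq.ne'
  have ha0 : a ≠ 0 := by
    intro h; apply h0; rw [← ha, h]; rfl
  have hd0 : (p : K) * a - q ≠ 0 := by
    intro h; apply h1
    have := congrArg (fun z : K => (z : ℂ)) h
    simpa [ha] using this
  have hb0 : b ≠ 0 := div_ne_zero (mul_ne_zero hqK ha0) hd0
  have hrel : (p : K) * (a * b) = q * (a + b) := by
    simp only [b]; field_simp; ring
  have haT : IntermediateField.adjoin ℚ {a} = ⊤ := by
    convert adjoin_gen_eq_top_aux (F := ℚ) α <;> exact Subsingleton.elim _ _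
  have hbT : IntermediateField.adjoin ℚ {b} = ⊤ := by
    rw [eq_top_iff, ← haT, IntermediateField.adjoin_simple_le_iff]
    have hbm := IntermediateField.mem_adjoin_simple_self ℚ b
    have hd : (p : K) * b - q ≠ 0 := by
      intro h
      have h2 : (q : K) * b = 0 := by linear_combination a * h - hrel
      exact mul_ne_zero hqK hb0 h2
    have : a = q * b / (p * b - q) := by
      rw [eq_div_iff hd]; linear_combination hrel
    rw [this]
    exact div_mem (mul_mem (intCast_mem _ _) hbm)
      (sub_mem (mul_mem (intCast_mem _ _) hbm) (intCast_mem _ _))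
  obtain ⟨A, N, hA, hN, hAi, hha⟩ := height_data K a haT
  obtain ⟨B, N', hB, hN', hBi, hhb⟩ := height_data K b hbT
  have hcore := core_bound p q hpq hq (fun φ : K →ₐ[ℚ] ℂ => φ a) (fun φ => φ b)
    (fun φ => (map_ne_zero φ).2 ha0) (fun φ => (map_ne_zero φ).2 hb0)
    (fun φ => by have := congrArg φ hrel; simpa using this) A B N N' hA hB hN hN' hAi hBi
  rw [← hb, hhb]
  rw [ha] at hha
  rw [hha, ← add_div, ge_iff_le]
  have hcard : (0 : ℝ) < Fintype.card (K →ₐ[ℚ] ℂ) := by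
    have : 0 < Fintype.card (K →ₐ[ℚ] ℂ) := Fintype.card_pos_iff.2 ⟨K.val⟩
    exact_mod_cast this
  have hpos : ∀ x : K, 0 < ∏ φ : K →ₐ[ℚ] ℂ, max ‖φ x‖ 1 := fun x =>
    Finset.prod_pos fun φ _ => lt_of_lt_of_le one_pos (le_max_right _ _)
  have hAp : 0 < |(A : ℝ)| := abs_pos.2 (by exact_mod_cast hA)
  have hBp : 0 < |(B : ℝ)| := abs_pos.2 (by exact_mod_cast hB)
  rw [le_div_iff₀ hcard, ← Real.log_mul (mul_pos hAp (hpos a)).ne' (mul_pos hBp (hpos b)).ne',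
    mul_comm, ← Real.log_pow]
  apply Real.log_le_log _ hcore
  have : (0 : ℝ) < ((max (|(|p| - q)|) q : ℤ) : ℝ) := by
    exact_mod_cast lt_of_lt_of_le hq (le_max_right _ _)
  positivity

/-- Row 1 of Table 1: for `σ(z) = qz/(pz - q)` (an involution) with `p, q` coprime,
`q > 0`, `p ≠ 0` and `p/q ∉ {1, -1, 2, -2}`: for every algebraic `α ≠ 0` one has
`h(α) + h(σ(α)) ≥ log max(||p| - q|, q)`, with equality at `α = 1` if `p > 0` and at
`α = -1` if `p < 0`. -/
theorem table1_row1 (p q : ℤ) (hpq : IsCoprime p q) (hq : 0 < q) (hp : p ≠ 0)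
    (hratio : (p : ℚ) / (q : ℚ) ∉ ({1, -1, 2, -2} : Set ℚ)) :
    (∀ α : ℂ, IsAlgebraic ℚ α → α ≠ 0 →
      height α + height ((q : ℂ) * α / ((p : ℂ) * α - (q : ℂ)))
        ≥ Real.log (max (|(|p| - q)| : ℤ) (q : ℤ) : ℤ)) ∧
    (0 < p → height (1 : ℂ) + height ((q : ℂ) * 1 / ((p : ℂ) * 1 - (q : ℂ)))
        = Real.log (max (|(|p| - q)| : ℤ) (q : ℤ) : ℤ)) ∧
    (p < 0 → height (-1 : ℂ) + height ((q : ℂ) * (-1) / ((p : ℂ) * (-1) - (q : ℂ)))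
        = Real.log (max (|(|p| - q)| : ℤ) (q : ℤ) : ℤ)) := by
  have h1h : height (1 : ℂ) = 0 := by
    have := height_rat 1 1 one_ne_zero isCoprime_one_left
    simpa using this
  have hm1h : height (-1 : ℂ) = 0 := by
    have := height_rat (-1) 1 one_ne_zero isCoprime_one_right
    simpa using this
  have h0h : height (0 : ℂ) = 0 := by
    have := height_rat 0 1 one_ne_zero isCoprime_one_right
    simpa using this
  have hqQ : (q : ℚ) ≠ 0 := by exact_mod_cast hq.ne'
  refine ⟨fun α hα h0 => ?_, fun hpos => ?_, fun hneg => ?_⟩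
  · by_cases h1 : (p : ℂ) * α - q = 0
    · have hpC : (p : ℂ) ≠ 0 := by exact_mod_cast hp
      have hαe : α = (q : ℂ) / p := by
        rw [eq_div_iff hpC]; linear_combination h1
      rw [h1, div_zero, h0h, add_zero, hαe, height_rat q p hp hpq.symm, ge_iff_le]
      apply Real.log_le_log
      · exact_mod_cast lt_of_lt_of_le hq (le_max_right _ _)
      · have : max (|(|p| - q)|) q ≤ max |q| |p| := by
          have := abs_nonneg p
          rw [abs_of_pos hq]
          rcases abs_cases (|p| - q) with h | h <;> rw [h.1] <;> omega
        exact_mod_cast this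
    · exact height_pos_part p q hpq hq α hα h0 h1
  · have hne : p - q ≠ 0 := by
      intro h
      apply hratio
      have : p = q := by omega
      rw [this, div_self hqQ]; simp
    have hcop : IsCoprime q (p - q) := by
      obtain ⟨u, v, huv⟩ := hpq
      exact ⟨u + v, u, by linear_combination huv⟩
    have := height_rat q (p - q) hne hcop
    rw [h1h, zero_add, mul_one, mul_one, abs_of_pos hpos]
    push_cast at this ⊢
    rw [this, max_comm, abs_of_pos (show (0 : ℝ) < q by exact_mod_cast hq)]
  · have hne : -p - q ≠ 0 := by
      intro h
      apply hratio
      have : p = -q := by omega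
      rw [this]; push_cast
      rw [neg_div, div_self hqQ]; simp
    have hcop : IsCoprime (-q) (-p - q) := by
      obtain ⟨u, v, huv⟩ := hpq
      exact ⟨u - v, -u, by linear_combination huv⟩
    have := height_rat (-q) (-p - q) hne hcop
    rw [hm1h, zero_add, mul_neg_one, mul_neg_one, abs_of_neg hneg]
    push_cast at this ⊢
    rw [this, max_comm, abs_neg, abs_of_pos (show (0 : ℝ) < q by exact_mod_cast hq)]
end

section
/- Let p and q be coprime integers with q > 0 and p ≠ −q, and let σ ∈ PGL₂(ℚ) be given by σ(z) = (qz + p)/((p + 2q)z − q) (an involution fixing 1). Then for every algebraic number α with α ≠ 1, h(α) + h(σ(α)) ≥ log max(|p + 3q|/4, |p − q|/4). Moreover, if 4 divides p − q, then equality holds for α = −1. -/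
/- For a nonzero `f ∈ ℤ[X]`, the Mahler measure `M(f) = |a_n| ∏ max(|α_i|,1)`. -/
open Polynomial

lemma mm_eq (f : ℤ[X]) :
    _root_.mahlerMeasure f = (f.map (Int.castRingHom ℂ)).mahlerMeasure := by
  rw [Polynomial.mahlerMeasure_eq_leadingCoeff_mul_prod_roots, _root_.mahlerMeasure,
    leadingCoeff_map_of_injective (RingHom.injective_int (Int.castRingHom ℂ))]
  simp [max_comm]

lemma intMinpoly_isPrimitive (α : ℂ) : (intMinpoly α).IsPrimitive :=
  isPrimitive_primPart _

lemma intMinpoly_map (α : ℂ) (hα : IsAlgebraic ℚ α) : ∃ b : ℚ, b ≠ 0 ∧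
    (intMinpoly α).map (Int.castRingHom ℚ) = C b * minpoly ℚ α := by
  obtain ⟨b, hb₁, hb₂⟩ := IsLocalization.integerNormalization_spec (nonZeroDivisors ℤ) (minpoly ℚ α)
  set N := IsLocalization.integerNormalization (nonZeroDivisors ℤ) (minpoly ℚ α) with hN
  have hmin : minpoly ℚ α ≠ 0 := minpoly.ne_zero hα.isIntegral
  have hN0 : N ≠ 0 := by
    rw [hN, Ne, IsFractionRing.integerNormalization_eq_zero_iff]; exact hmin
  have hc : (N.content : ℚ) ≠ 0 := by
    exact_mod_cast fun h => hN0 (content_eq_zero_iff.1 h)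
  have hb0 : (b : ℚ) ≠ 0 := by exact_mod_cast nonZeroDivisors.ne_zero hb₁
  refine ⟨(N.content : ℚ)⁻¹ * b, mul_ne_zero (inv_ne_zero hc) hb0, ?_⟩
  have h1 : N.map (Int.castRingHom ℚ) = C (b : ℚ) * minpoly ℚ α := by
    have : N.map (Int.castRingHom ℚ) = b • minpoly ℚ α := hb₂
    rw [this]; ext; simp
  have h2 : N.map (Int.castRingHom ℚ)
      = C (N.content : ℚ) * (intMinpoly α).map (Int.castRingHom ℚ) := by
    conv_lhs => rw [N.eq_C_content_mul_primPart]
    simp [intMinpoly, hN]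
  rw [h1] at h2
  rw [C_mul, mul_assoc, h2, ← mul_assoc, ← C_mul, inv_mul_cancel₀ hc]; simp

lemma intMinpoly_natDegree (α : ℂ) (hα : IsAlgebraic ℚ α) :
    (intMinpoly α).natDegree = (minpoly ℚ α).natDegree := by
  obtain ⟨b, hb, h⟩ := intMinpoly_map α hα
  rw [← natDegree_map_eq_of_injective (RingHom.injective_int (Int.castRingHom ℚ)) (intMinpoly α),
    h, natDegree_C_mul hb]

lemma intMinpoly_root (α : ℂ) (hα : IsAlgebraic ℚ α) :
    ((intMinpoly α).map (Int.castRingHom ℂ)).eval α = 0 := by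
  obtain ⟨b, hb, h⟩ := intMinpoly_map α hα
  have : (intMinpoly α).map (Int.castRingHom ℂ)
      = ((intMinpoly α).map (Int.castRingHom ℚ)).map (algebraMap ℚ ℂ) := by
    rw [Polynomial.map_map]; congr 1
  rw [this, h, eval_map_algebraMap]
  simp

lemma intMinpoly_eval_one (α : ℂ) (hα : IsAlgebraic ℚ α) (h1 : α ≠ 1) :
    (intMinpoly α).eval 1 ≠ 0 := by
  obtain ⟨b, hb, h⟩ := intMinpoly_map α hα
  intro h0
  have h2 : ((intMinpoly α).map (Int.castRingHom ℚ)).eval 1 = 0 := by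
    rw [eval_one_map, h0]; simp
  rw [h, eval_mul, eval_C] at h2
  have h3 : (minpoly ℚ α).IsRoot 1 := (mul_eq_zero.1 h2).resolve_left hb
  have h4 := dvd_iff_isRoot.2 h3
  have h5 := (irreducible_X_sub_C (1:ℚ)).dvd_symm (minpoly.irreducible hα.isIntegral) h4
  obtain ⟨k, hk⟩ := h5
  have h6 := congrArg (aeval α) hk
  simp [sub_eq_zero] at h6
  exact h1 h6

lemma mm_unique (β : ℂ) (hβ : IsAlgebraic ℚ β) (g : ℤ[X]) (hg : g.IsPrimitive)
    (h0 : (g.map (Int.castRingHom ℂ)).eval β = 0)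
    (hd : g.natDegree ≤ (minpoly ℚ β).natDegree) :
    _root_.mahlerMeasure g = _root_.mahlerMeasure (intMinpoly β) := by
  obtain ⟨b, hb, h⟩ := intMinpoly_map β hβ
  have h1 : minpoly ℚ β ∣ g.map (Int.castRingHom ℚ) := by
    apply minpoly.dvd
    rw [← eval_map_algebraMap, Polynomial.map_map]
    have e : (algebraMap ℚ ℂ).comp (Int.castRingHom ℚ) = Int.castRingHom ℂ := by ext; simp
    rw [e]; exact h0
  have h2 : intMinpoly β ∣ g := by
    rw [IsPrimitive.Int.dvd_iff_map_cast_dvd_map_cast _ _ (intMinpoly_isPrimitive β), h]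
    rw [IsUnit.mul_left_dvd (isUnit_C.2 (isUnit_iff_ne_zero.2 hb))]
    exact h1
  obtain ⟨k, hk⟩ := h2
  have hg0 : g ≠ 0 := hg.ne_zero
  have hk0 : k ≠ 0 := by rintro rfl; simp at hk; exact hg0 hk
  have hf0 : intMinpoly β ≠ 0 := (intMinpoly_isPrimitive β).ne_zero
  have hkd : k.natDegree = 0 := by
    have := natDegree_mul hf0 hk0
    rw [← hk, intMinpoly_natDegree β hβ] at this
    omega
  rw [natDegree_eq_zero] at hkd
  obtain ⟨u, rfl⟩ := hkd
  have hu : IsUnit u := hg u ⟨_, by rw [hk, mul_comm]⟩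
  rw [mm_eq, mm_eq, hk, Polynomial.map_mul, Polynomial.mahlerMeasure_mul]
  rcases Int.isUnit_iff.1 hu with rfl | rfl
  · simp
  · simp only [map_C, Polynomial.mahlerMeasure_const]; simp

lemma height_rat_s10 (A B : ℤ) (hAB : IsCoprime A B) (hB : B ≠ 0) :
    height ((A : ℂ) / (B : ℂ)) = Real.log (max |(A : ℝ)| |(B : ℝ)|) := by
  have hβ : ((A : ℂ) / (B : ℂ)) = algebraMap ℚ ℂ ((A : ℚ) / B) := by simp
  have halg : IsAlgebraic ℚ ((A : ℂ) / (B : ℂ)) := by rw [hβ]; exact isAlgebraic_algebraMap _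
  have hdeg : (minpoly ℚ ((A : ℂ) / (B : ℂ))).natDegree = 1 := by
    rw [hβ, minpoly.eq_X_sub_C]; exact natDegree_X_sub_C _
  have hBC : (B : ℂ) ≠ 0 := by exact_mod_cast hB
  have := mm_unique _ halg (C B * X + C (-A)) (by
      intro r hr
      rw [C_dvd_iff_dvd_coeff] at hr
      have h0 := hr 0
      have h1 := hr 1
      simp only [coeff_add, coeff_C_mul, coeff_X_zero, mul_zero, coeff_C_zero, zero_add,
        dvd_neg, coeff_X_one, mul_one, coeff_C_succ, add_zero] at h0 h1
      exact hAB.isUnit_of_dvd' h0 h1) (by simp; field_simp; simp) (by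
      rw [hdeg]; exact natDegree_linear_le)
  rw [height, hdeg, ← this, mm_eq]
  simp only [Polynomial.map_add, Polynomial.map_mul, map_C, map_X]
  rw [Polynomial.mahlerMeasure_C_mul_X_add_C (by simpa using hB)]
  simp [max_comm]

lemma height_zero' : height 0 = 0 := by
  have := height_rat_s10 0 1 (by simp [isCoprime_zero_left]) one_ne_zero
  simpa using this

/-- The transform of `f` under the involution. -/
noncomputable def trG (p q : ℤ) (f : ℤ[X]) : ℤ[X] :=
  ∑ i ∈ Finset.range (f.natDegree + 1),
    C (f.coeff i) * (C q * X + C p) ^ i * (C (p + 2 * q) * X - C q) ^ (f.natDegree - i)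

lemma trG_natDegree_le (p q : ℤ) (f : ℤ[X]) : (trG p q f).natDegree ≤ f.natDegree := by
  apply natDegree_sum_le_of_forall_le
  intro i hi
  rw [Finset.mem_range] at hi
  have h1 : ((C q * X + C p) ^ i : ℤ[X]).natDegree ≤ i := by
    refine natDegree_pow_le.trans ?_
    have : (C q * X + C p : ℤ[X]).natDegree ≤ 1 := natDegree_linear_le
    nlinarith
  have h2 : ((C (p + 2 * q) * X - C q) ^ (f.natDegree - i) : ℤ[X]).natDegree ≤ f.natDegree - i := by
    refine natDegree_pow_le.trans ?_
    have : (C (p + 2 * q) * X - C q : ℤ[X]).natDegree ≤ 1 := by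
      rw [sub_eq_add_neg, ← C_neg]; exact natDegree_linear_le
    calc _ ≤ (f.natDegree - i) * 1 := Nat.mul_le_mul_left _ this
      _ = _ := mul_one _
  calc _ ≤ (C (f.coeff i) * (C q * X + C p) ^ i).natDegree + _ := natDegree_mul_le
    _ ≤ i + (f.natDegree - i) := add_le_add ((natDegree_C_mul_le _ _).trans h1) h2
    _ = _ := by omega

lemma sum_hom {K E : Type*} [Field K] [Field E] (φ : K →+* E) (F : K[X]) (hs : F.Splits)
    (x y : E) (hy : y ≠ 0) :
    ∑ i ∈ Finset.range (F.natDegree + 1), φ (F.coeff i) * x ^ i * y ^ (F.natDegree - i)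
      = φ F.leadingCoeff * (F.roots.map (fun z => x - φ z * y)).prod := by
  have h1 : ∑ i ∈ Finset.range (F.natDegree + 1), φ (F.coeff i) * x ^ i * y ^ (F.natDegree - i)
      = y ^ F.natDegree * F.eval₂ φ (x / y) := by
    rw [eval₂_eq_sum_range, Finset.mul_sum]
    refine Finset.sum_congr rfl fun i hi => ?_
    rw [Finset.mem_range] at hi
    have : y ^ F.natDegree = y ^ (F.natDegree - i) * y ^ i := by rw [← pow_add]; congr 1; omega
    rw [this, div_pow]; field_simp
  have h2 : F.eval₂ φ (x / y) = φ F.leadingCoeff * (F.roots.map (fun z => x / y - φ z)).prod := by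
    conv_lhs => rw [hs.eq_prod_roots]
    rw [eval₂_mul, eval₂_C, eval₂_multiset_prod, Multiset.map_map]
    congr 3; ext z; simp
  have h3 : F.natDegree = F.roots.card := hs.natDegree_eq_card_roots
  have h4 : y ^ F.roots.card * (F.roots.map (fun z => x / y - φ z)).prod
      = (F.roots.map (fun z => x - φ z * y)).prod := by
    have : (fun z => x - φ z * y) = fun z => y * (x / y - φ z) := by
      ext z; field_simp
    rw [this, Multiset.prod_map_mul]
    simp
  rw [h1, h2, h3, mul_left_comm, h4]

lemma trG_map {K : Type*} [Field K] [IsAlgClosed K] [CharZero K] (p q : ℤ) (hq : 0 < q)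
    (f : ℤ[X]) :
    (trG p q f).map (Int.castRingHom K) = C (f.leadingCoeff : K) *
      ((f.map (Int.castRingHom K)).roots.map
        (fun z => C ((q : K) - (p + 2 * q) * z) * X + C ((p : K) + q * z))).prod := by
  have hinj : Function.Injective (algebraMap K[X] (RatFunc K)) := RatFunc.algebraMap_injective K
  set F := f.map (Int.castRingHom K) with hF
  have hdeg : F.natDegree = f.natDegree :=
    natDegree_map_eq_of_injective (RingHom.injective_int (Int.castRingHom K)) f
  have hlc : F.leadingCoeff = (f.leadingCoeff : K) := by
    rw [hF, leadingCoeff_map_of_injective (RingHom.injective_int (Int.castRingHom K))]; simp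
  have hqK : (q : K) ≠ 0 := by exact_mod_cast hq.ne'
  have hy : (C ((p : K) + 2 * q) * X - C (q : K)) ≠ 0 := by
    intro h
    have := congrArg (fun P => P.eval 0) h
    simp at this
    exact hq.ne' this
  apply hinj
  have := sum_hom ((algebraMap K[X] (RatFunc K)).comp C) F (IsAlgClosed.splits F)
    (algebraMap K[X] (RatFunc K) (C (q : K) * X + C (p : K)))
    (algebraMap K[X] (RatFunc K) (C ((p : K) + 2 * q) * X - C (q : K)))
    (by rwa [Ne, map_eq_zero_iff _ hinj])
  rw [map_mul, map_multiset_prod, Multiset.map_map]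
  rw [hlc, hdeg] at this
  convert this using 1
  · rw [trG, Polynomial.map_sum, map_sum]
    refine Finset.sum_congr rfl fun i _ => ?_
    simp only [Polynomial.map_mul, Polynomial.map_pow, Polynomial.map_add, Polynomial.map_sub,
      map_C, map_X, _root_.map_mul, _root_.map_pow, RingHom.comp_apply, hF, coeff_map, Int.coe_castRingHom,
      Int.cast_add, Int.cast_mul, Int.cast_ofNat]
  · simp only [RingHom.comp_apply]
    congr 3
    ext z
    simp only [Function.comp, ← map_mul, ← map_sub]
    congr 1
    simp only [map_add, map_sub, map_mul]
    ring

lemma eval_one_prod {K : Type*} [Field K] [IsAlgClosed K] [CharZero K] (f : ℤ[X]) :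
    ((f.eval 1 : ℤ) : K) = (f.leadingCoeff : K) *
      ((f.map (Int.castRingHom K)).roots.map (fun z => 1 - z)).prod := by
  have h := (IsAlgClosed.splits (f.map (Int.castRingHom K))).eq_prod_roots
  have h2 := congrArg (fun P => P.eval 1) h
  simp only [eval_one_map, eval_mul, eval_C, eval_multiset_prod, Multiset.map_map] at h2
  rw [leadingCoeff_map_of_injective (RingHom.injective_int (Int.castRingHom K))] at h2
  simpa [Function.comp_def] using h2

lemma arch_aux (u : ℂ) (s q : ℝ) :
    (2 * |q| + |s|) / 4 ≤ max ‖u + 1 / 2‖ ‖u - 1 / 2‖ *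
      max ‖s * u + q + s / 2‖ ‖s * u + q - s / 2‖ := by
  have h1 : |u.re| + 1 / 2 ≤ max ‖u + 1 / 2‖ ‖u - 1 / 2‖ := by
    have a := Complex.abs_re_le_norm (u + 1 / 2)
    have b := Complex.abs_re_le_norm (u - 1 / 2)
    have e1 : (u + 1 / 2 : ℂ).re = u.re + 1 / 2 := by simp
    have e2 : (u - 1 / 2 : ℂ).re = u.re - 1 / 2 := by simp
    rw [e1] at a
    rw [e2] at b
    rw [le_max_iff]
    rcases le_total 0 u.re with h | h
    · left; refine le_trans ?_ a; rw [abs_of_nonneg h, abs_of_nonneg] <;> linarith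
    · right; refine le_trans ?_ b; rw [abs_of_nonpos h, abs_of_nonpos] <;> linarith
  have h2 : |s * u.re + q| + |s| / 2 ≤ max ‖s * u + q + s / 2‖ ‖s * u + q - s / 2‖ := by
    have a := Complex.abs_re_le_norm (s * u + q + s / 2)
    have b := Complex.abs_re_le_norm (s * u + q - s / 2)
    have e1 : (s * u + q + s / 2 : ℂ).re = s * u.re + q + s / 2 := by simp
    have e2 : (s * u + q - s / 2 : ℂ).re = s * u.re + q - s / 2 := by simp
    rw [e1] at a
    rw [e2] at b
    rw [le_max_iff]
    have key : |s * u.re + q| + |s| / 2 ≤ |s * u.re + q + s / 2| ∨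
        |s * u.re + q| + |s| / 2 ≤ |s * u.re + q - s / 2| := by
      generalize s * u.re + q = w
      rcases le_total 0 w with h | h <;> rcases le_total 0 s with h' | h'
      · left; rw [abs_of_nonneg h, abs_of_nonneg h', abs_of_nonneg] <;> linarith
      · right; rw [abs_of_nonneg h, abs_of_nonpos h', abs_of_nonneg] <;> linarith
      · right; rw [abs_of_nonpos h, abs_of_nonneg h', abs_of_nonpos] <;> linarith
      · left; rw [abs_of_nonpos h, abs_of_nonpos h', abs_of_nonpos] <;> linarith
    exact key.imp (fun h => h.trans a) (fun h => h.trans b)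
  refine le_trans ?_ (mul_le_mul h1 h2 (by positivity) (by positivity))
  have h3 : |q| ≤ |s| * |u.re| + |s * u.re + q| := by
    rw [← abs_mul]
    calc |q| = |(s * u.re + q) - s * u.re| := by congr 1; ring
      _ ≤ |s * u.re + q| + |s * u.re| := abs_sub _ _
      _ = _ := add_comm _ _
  have h4 : 0 ≤ |u.re| * |s * u.re + q| := by positivity
  nlinarith

lemma arch_ineq (p q : ℝ) (z : ℂ) :
    max (|p + 3 * q| / 4) (|p - q| / 4) * ‖1 - z‖ ^ 2 ≤ max 1 ‖z‖ *
      max ‖(q : ℂ) - (p + 2 * q) * z‖ ‖(p : ℂ) + q * z‖ := by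
  have hC : max (|p + 3 * q| / 4) (|p - q| / 4) ≤ (2 * |q| + |p + q|) / 4 := by
    apply max_le
    · have : |p + 3 * q| ≤ |2 * q| + |p + q| := by
        rw [show p + 3 * q = 2 * q + (p + q) by ring]; exact abs_add_le _ _
      rw [abs_mul, abs_two] at this
      linarith
    · have : |p - q| ≤ |2 * q| + |p + q| := by
        rw [show p - q = -(2 * q - (p + q)) by ring, abs_neg]; exact abs_sub _ _
      rw [abs_mul, abs_two] at this
      linarith
  by_cases hz : z = 1
  · subst hz; simp
  have hz1 : z - 1 ≠ 0 := sub_ne_zero.2 hz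
  have hn : 0 < ‖1 - z‖ := norm_pos_iff.2 (sub_ne_zero.2 (Ne.symm hz))
  have key := arch_aux ((z + 1) / (2 * (z - 1))) (p + q) q
  push_cast at key
  have e1 : (z + 1) / (2 * (z - 1)) + 1 / 2 = z / (z - 1) := by field_simp; ring
  have e2 : (z + 1) / (2 * (z - 1)) - 1 / 2 = 1 / (z - 1) := by field_simp; ring
  have e3 : ((p : ℂ) + q) * ((z + 1) / (2 * (z - 1))) + q + (p + q) / 2
      = ((p + 2 * q) * z - q) / (z - 1) := by field_simp; ring
  have e4 : ((p : ℂ) + q) * ((z + 1) / (2 * (z - 1))) + q - (p + q) / 2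
      = (p + q * z) / (z - 1) := by field_simp; ring
  rw [e1, e2, e3, e4, norm_div, norm_div, norm_div, norm_div, norm_one,
    norm_sub_rev z 1, max_div_div_right hn.le, max_div_div_right hn.le,
    norm_sub_rev _ (q : ℂ), max_comm ‖z‖, div_mul_div_comm, le_div_iff₀ (by positivity)] at key
  calc _ ≤ (2 * |q| + |p + q|) / 4 * ‖1 - z‖ ^ 2 := by gcongr
    _ ≤ _ := by rw [pow_two]; exact key

lemma mahler_linear (a b : ℂ) : (C a * X + C b).mahlerMeasure = max ‖a‖ ‖b‖ := by
  by_cases ha : a = 0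
  · simp [ha]
  · exact Polynomial.mahlerMeasure_C_mul_X_add_C ha b

lemma gauss_linear {K : Type*} [Field K] (v : AbsoluteValue K ℝ) (a b : K) :
    max (v a) (v b) ≤ (C a * X + C b).gaussNorm v 1 := by
  have h0 := (C a * X + C b).le_gaussNorm v zero_le_one 0
  have h1 := (C a * X + C b).le_gaussNorm v zero_le_one 1
  simp [coeff_C] at h0 h1
  exact max_le h1 h0

lemma nonarch_ineq {K : Type*} [NormedField K] (hna : IsNonarchimedean (norm : K → ℝ))
    (hint : ∀ n : ℤ, ‖(n : K)‖ ≤ 1) (p q : ℤ) (hpq : IsCoprime p q) (z : K) :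
    ‖1 - z‖ ^ 2 ≤ max 1 ‖z‖ * max ‖(q : K) - (p + 2 * q) * z‖ ‖(p : K) + q * z‖ := by
  obtain ⟨A, B, hAB⟩ : IsCoprime (p + q) (p + 2 * q) := by
    obtain ⟨a, b, h⟩ := hpq
    exact ⟨2 * a - b, b - a, by linear_combination h⟩
  have hABK : (A : K) * (p + q) + B * (p + 2 * q) = 1 := by
    have := congrArg (Int.cast : ℤ → K) hAB
    push_cast at this
    exact this
  have hlin : ∀ m n : ℤ, ‖(m : K) * z + n‖ ≤ max 1 ‖z‖ := by
    intro m n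
    refine (hna _ _).trans (max_le ?_ ?_)
    · rw [norm_mul]
      exact (mul_le_of_le_one_left (norm_nonneg _) (hint m)).trans (le_max_right _ _)
    · exact (hint n).trans (le_max_left _ _)
  have e : (1 - z) ^ 2 = ((-A : ℤ) * z + (A + B : ℤ)) * ((p : K) + q * z)
      + ((-A - B : ℤ) * z + (A + 2 * B : ℤ)) * ((q : K) - (p + 2 * q) * z) := by
    push_cast
    linear_combination (-(1 - z) ^ 2) * hABK
  rw [← norm_pow, e]
  refine (hna _ _).trans (max_le ?_ ?_)
  · rw [norm_mul]
    exact mul_le_mul (hlin _ _) (le_max_right _ _) (norm_nonneg _) (by positivity)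
  · rw [norm_mul]
    exact mul_le_mul (hlin _ _) (le_max_left _ _) (norm_nonneg _) (by positivity)

lemma padic_ineq (l : ℕ) [Fact l.Prime] (p q : ℤ) (hpq : IsCoprime p q) (hq : 0 < q) (f : ℤ[X]) :
    ‖(((f.eval 1 : ℤ)) : ℚ_[l])‖ ^ 2 ≤ ‖((trG p q f).content : ℚ_[l])‖ := by
  have hext : ∀ n : ℤ, ‖(n : PadicAlgCl l)‖ = ‖(n : ℚ_[l])‖ := by
    intro n
    have := PadicAlgCl.norm_extends l (n : ℚ_[l])
    rw [← this]; simp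
  have hint : ∀ n : ℤ, ‖(n : PadicAlgCl l)‖ ≤ 1 := fun n => by
    rw [hext]; exact Padic.norm_int_le_one n
  let v : AbsoluteValue (PadicAlgCl l) ℝ := IsAbsoluteValue.toAbsoluteValue norm
  have hv : ∀ x, v x = ‖x‖ := fun _ => rfl
  have hna : IsNonarchimedean v := PadicAlgCl.isNonarchimedean l
  have hmul : ∀ P Q : (PadicAlgCl l)[X],
      (P * Q).gaussNorm v 1 = P.gaussNorm v 1 * Q.gaussNorm v 1 :=
    gaussNorm_mul hna one_pos
  have hprod : ∀ s : Multiset (PadicAlgCl l)[X],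
      s.prod.gaussNorm v 1 = (s.map (fun P => P.gaussNorm v 1)).prod := by
    intro s
    induction s using Multiset.induction_on with
    | empty =>
      have := gaussNorm_C v 1 (1 : PadicAlgCl l)
      simpa [-gaussNorm_C] using this
    | cons a s ih => simp [hmul, ih]
  set F := f.map (Int.castRingHom (PadicAlgCl l)) with hF
  have hlc : F.leadingCoeff = (f.leadingCoeff : PadicAlgCl l) := by
    rw [hF, leadingCoeff_map_of_injective (RingHom.injective_int (Int.castRingHom _))]; simp
  have hFn : ‖(f.leadingCoeff : PadicAlgCl l)‖ *
      (F.roots.map (fun z => max 1 ‖z‖)).prod ≤ 1 := by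
    have h1 : F.gaussNorm v 1 ≤ 1 := by
      obtain ⟨i, hi⟩ := F.exists_eq_gaussNorm v 1
      rw [hi, hv, hF]; simpa using hint _
    refine le_trans ?_ h1
    conv_rhs => rw [(IsAlgClosed.splits F).eq_prod_roots, hmul, gaussNorm_C, hv, hprod,
      Multiset.map_map, hlc]
    gcongr
    refine Multiset.prod_map_le_prod_map₀ _ _ (fun _ _ => by positivity) fun z _ => ?_
    have := gauss_linear v 1 (-z)
    simpa [hv, sub_eq_add_neg] using this
  have hGn : ‖(f.leadingCoeff : PadicAlgCl l)‖ * (F.roots.map (fun z =>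
      max ‖(q : PadicAlgCl l) - (p + 2 * q) * z‖ ‖(p : PadicAlgCl l) + q * z‖)).prod
      ≤ ‖((trG p q f).content : PadicAlgCl l)‖ := by
    have h1 : ((trG p q f).map (Int.castRingHom (PadicAlgCl l))).gaussNorm v 1
        ≤ ‖((trG p q f).content : PadicAlgCl l)‖ := by
      obtain ⟨i, hi⟩ := ((trG p q f).map (Int.castRingHom (PadicAlgCl l))).exists_eq_gaussNorm v 1
      rw [hi, hv]
      obtain ⟨k, hk⟩ := (trG p q f).content_dvd_coeff i
      rw [coeff_map, hk]
      simp only [eq_intCast, Int.cast_mul, norm_mul, one_pow, mul_one]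
      exact mul_le_of_le_one_right (norm_nonneg _) (hint k)
    refine le_trans ?_ h1
    rw [trG_map p q hq, hmul, gaussNorm_C, hv, hprod, Multiset.map_map]
    gcongr
    refine Multiset.prod_map_le_prod_map₀ _ _ (fun _ _ => by positivity) fun z _ => ?_
    exact gauss_linear v _ _
  have hP0 : 0 ≤ (F.roots.map (fun z =>
      max ‖(q : PadicAlgCl l) - (p + 2 * q) * z‖ ‖(p : PadicAlgCl l) + q * z‖)).prod :=
    Multiset.prod_map_nonneg fun z _ => by positivity
  rw [← hext, ← hext, eval_one_prod f, norm_mul, ← hF]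
  have hnp : ‖(F.roots.map (fun z => 1 - z)).prod‖ = (F.roots.map (fun z => ‖1 - z‖)).prod := by
    have := map_multiset_prod (normHom : PadicAlgCl l →*₀ ℝ) (F.roots.map (fun z => 1 - z))
    rw [Multiset.map_map] at this
    exact this
  have hle : (F.roots.map (fun z => ‖1 - z‖)).prod ^ 2 ≤ (F.roots.map (fun z => max 1 ‖z‖)).prod *
      (F.roots.map (fun z =>
      max ‖(q : PadicAlgCl l) - (p + 2 * q) * z‖ ‖(p : PadicAlgCl l) + q * z‖)).prod := by
    rw [← Multiset.prod_map_pow, ← Multiset.prod_map_mul]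
    exact Multiset.prod_map_le_prod_map₀ _ _ (fun _ _ => by positivity) fun z _ =>
      nonarch_ineq (PadicAlgCl.isNonarchimedean l) hint p q hpq z
  rw [hnp, mul_pow]
  calc _ ≤ ‖(f.leadingCoeff : PadicAlgCl l)‖ ^ 2 * _ := mul_le_mul_of_nonneg_left hle (by positivity)
    _ = _ * _ := by rw [pow_two, mul_mul_mul_comm]
    _ ≤ 1 * ‖((trG p q f).content : PadicAlgCl l)‖ :=
      mul_le_mul hFn hGn (mul_nonneg (norm_nonneg _) hP0) zero_le_one
    _ = _ := one_mul _

lemma content_dvd (p q : ℤ) (hpq : IsCoprime p q) (hq : 0 < q) (f : ℤ[X]) :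
    (trG p q f).content ∣ (f.eval 1) ^ 2 := by
  rw [← Int.natAbs_dvd_natAbs, Nat.dvd_iff_prime_pow_dvd_dvd]
  intro l k hl hk
  have := Fact.mk hl
  have hk' : ((l : ℤ) ^ k) ∣ (trG p q f).content := by
    rw [← Int.dvd_natAbs]; exact_mod_cast hk
  rw [← Padic.norm_int_le_pow_iff_dvd] at hk'
  have := (padic_ineq l p q hpq hq f).trans hk'
  rw [← norm_pow, ← Int.cast_pow, Padic.norm_int_le_pow_iff_dvd, ← Int.dvd_natAbs] at this
  exact_mod_cast this

lemma arch_main (p q : ℤ) (hq : 0 < q) (f : ℤ[X]) :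
    (max ((|p + 3 * q| : ℝ) / 4) ((|p - q| : ℝ) / 4)) ^ f.natDegree * ((f.eval 1 : ℤ) : ℝ) ^ 2
      ≤ _root_.mahlerMeasure f * _root_.mahlerMeasure (trG p q f) := by
  set c : ℝ := max ((|p + 3 * q| : ℝ) / 4) ((|p - q| : ℝ) / 4) with hc
  have hc0 : 0 ≤ c := by positivity
  set F := f.map (Int.castRingHom ℂ) with hF
  have hlc : F.leadingCoeff = (f.leadingCoeff : ℂ) := by
    rw [hF, leadingCoeff_map_of_injective (RingHom.injective_int (Int.castRingHom _))]; simp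
  have hdeg : f.natDegree = F.roots.card := by
    rw [← (IsAlgClosed.splits F).natDegree_eq_card_roots]
    exact (natDegree_map_eq_of_injective (RingHom.injective_int (Int.castRingHom ℂ)) f).symm
  have h1 : ((f.eval 1 : ℤ) : ℝ) ^ 2 = ‖(f.leadingCoeff : ℂ)‖ ^ 2 *
      (F.roots.map (fun z => ‖1 - z‖ ^ 2)).prod := by
    have hnp : ‖(F.roots.map (fun z => 1 - z)).prod‖ = (F.roots.map (fun z => ‖1 - z‖)).prod := by
      have := map_multiset_prod (normHom : ℂ →*₀ ℝ) (F.roots.map (fun z => 1 - z))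
      rw [Multiset.map_map] at this
      exact this
    have h := congrArg (fun x => ‖x‖ ^ 2) (eval_one_prod (K := ℂ) f)
    simp only [norm_mul, ← hF] at h
    rw [hnp, mul_pow, ← Multiset.prod_map_pow] at h
    rw [← h]; simp
  rw [mm_eq, mm_eq, trG_map p q hq, Polynomial.mahlerMeasure_mul,
    Polynomial.prod_mahlerMeasure_eq_mahlerMeasure_prod, Multiset.map_map,
    Polynomial.mahlerMeasure_eq_leadingCoeff_mul_prod_roots, Polynomial.mahlerMeasure_const,
    ← hF, hlc, h1, mul_mul_mul_comm, ← pow_two, ← Multiset.prod_map_mul, mul_left_comm]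
  refine mul_le_mul_of_nonneg_left ?_ (by positivity)
  have : c ^ f.natDegree = (F.roots.map (fun _ => c)).prod := by simp [hdeg]
  rw [this, ← Multiset.prod_map_mul]
  refine Multiset.prod_map_le_prod_map₀ _ _ (fun _ _ => by positivity) fun z _ => ?_
  simp only [Function.comp, mahler_linear]
  have := arch_ineq p q z
  simpa [hc] using this

lemma trG_ne_zero (p q : ℤ) (hq : 0 < q) (hp : p ≠ -q) (f : ℤ[X]) (hf : f ≠ 0) :
    trG p q f ≠ 0 := by
  intro h0
  have h := trG_map (K := ℂ) p q hq f
  rw [h0, Polynomial.map_zero, eq_comm, mul_eq_zero, C_eq_zero, Int.cast_eq_zero,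
    leadingCoeff_eq_zero] at h
  have h := h.resolve_left hf
  rw [Multiset.prod_eq_zero_iff, Multiset.mem_map] at h
  obtain ⟨z, -, hz⟩ := h
  have e0 := congrArg (fun P => P.coeff 0) hz
  have e1 := congrArg (fun P => P.coeff 1) hz
  simp only [coeff_add, coeff_C_mul, coeff_X_zero, mul_zero, coeff_C_zero, zero_add,
        coeff_X_one, mul_one, coeff_C_succ, add_zero, coeff_zero] at e0 e1
  have : ((p : ℂ) + q) ^ 2 = 0 := by
    linear_combination (q : ℂ) * e1 + ((p : ℂ) + 2 * q) * e0
  have h2 : (p : ℂ) + q = 0 := by simpa using this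
  have h3 : p + q = 0 := by exact_mod_cast h2
  omega

lemma deg_eq (p q : ℤ) (hp : p ≠ -q) (α : ℂ)
    (hD : ((p : ℂ) + 2 * (q : ℂ)) * α - (q : ℂ) ≠ 0) (hα : IsAlgebraic ℚ α) :
    IsAlgebraic ℚ (((q : ℂ) * α + (p : ℂ)) / (((p : ℂ) + 2 * (q : ℂ)) * α - (q : ℂ))) ∧
    (minpoly ℚ α).natDegree = (minpoly ℚ
      (((q : ℂ) * α + (p : ℂ)) / (((p : ℂ) + 2 * (q : ℂ)) * α - (q : ℂ)))).natDegree := by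
  set β := ((q : ℂ) * α + (p : ℂ)) / (((p : ℂ) + 2 * (q : ℂ)) * α - (q : ℂ)) with hβ
  have hs : (p : ℂ) + q ≠ 0 := by
    intro h
    have h3 : p + q = 0 := by exact_mod_cast h
    omega
  have hmem : ∀ γ : ℂ, ((q : ℂ) * γ + (p : ℂ)) / (((p : ℂ) + 2 * (q : ℂ)) * γ - (q : ℂ)) ∈
      IntermediateField.adjoin ℚ {γ} := by
    intro γ
    have hγ := IntermediateField.mem_adjoin_simple_self ℚ γ
    have hz : ∀ n : ℤ, (n : ℂ) ∈ IntermediateField.adjoin ℚ {γ} := fun n => intCast_mem _ n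
    have h2 : (2 : ℂ) ∈ IntermediateField.adjoin ℚ {γ} := by exact_mod_cast hz 2
    exact div_mem (add_mem (mul_mem (hz _) hγ) (hz _))
      (sub_mem (mul_mem (add_mem (hz _) (mul_mem h2 (hz _))) hγ) (hz _))
  have hinv : α = ((q : ℂ) * β + (p : ℂ)) / (((p : ℂ) + 2 * (q : ℂ)) * β - (q : ℂ)) := by
    have hβD : β * (((p : ℂ) + 2 * (q : ℂ)) * α - (q : ℂ)) = (q : ℂ) * α + p :=
      div_mul_cancel₀ _ hD
    have e1 : (q : ℂ) * β + p = ((p : ℂ) + q) ^ 2 * α / (((p : ℂ) + 2 * (q : ℂ)) * α - (q : ℂ)) := by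
      rw [eq_div_iff hD]; linear_combination (q : ℂ) * hβD
    have e2 : ((p : ℂ) + 2 * (q : ℂ)) * β - (q : ℂ)
        = ((p : ℂ) + q) ^ 2 / (((p : ℂ) + 2 * (q : ℂ)) * α - (q : ℂ)) := by
      rw [eq_div_iff hD]; linear_combination ((p : ℂ) + 2 * q) * hβD
    rw [e1, e2, div_div_div_cancel_right₀ hD, mul_div_cancel_left₀ _ (pow_ne_zero 2 hs)]
  have hβa : IsAlgebraic ℚ β := by
    have hz : ∀ n : ℤ, IsAlgebraic ℚ (n : ℂ) := fun n => isAlgebraic_intCast n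
    have h2 : IsAlgebraic ℚ (2 : ℂ) := by exact_mod_cast hz 2
    rw [hβ, div_eq_mul_inv]
    exact (((hz q).mul hα).add (hz p)).mul
      (((((hz p).add (h2.mul (hz q))).mul hα).sub (hz q)).inv)
  refine ⟨hβa, ?_⟩
  have heq : IntermediateField.adjoin ℚ {α} = IntermediateField.adjoin ℚ {β} := by
    apply le_antisymm
    · rw [IntermediateField.adjoin_simple_le_iff, hinv]
      exact hmem β
    · rw [IntermediateField.adjoin_simple_le_iff]
      exact hmem α
  rw [← IntermediateField.adjoin.finrank hα.isIntegral,
    ← IntermediateField.adjoin.finrank hβa.isIntegral, heq]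

lemma max_pos' (p q : ℤ) (hq : 0 < q) :
    0 < max ((|p + 3 * q| : ℝ) / 4) ((|p - q| : ℝ) / 4) := by
  by_contra h
  push Not at h
  have hqR : (0 : ℝ) < q := by exact_mod_cast hq
  have h1 := (le_max_left _ _).trans h
  have h2 := (le_max_right _ _).trans h
  have h3 := le_abs_self ((p : ℝ) + 3 * q)
  have h4 := neg_abs_le ((p : ℝ) - q)
  linarith

lemma main_finite (p q : ℤ) (hpq : IsCoprime p q) (hq : 0 < q) (hp : p ≠ -q) (α : ℂ)
    (hα : IsAlgebraic ℚ α) (h1 : α ≠ 1)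
    (hD : ((p : ℂ) + 2 * (q : ℂ)) * α - (q : ℂ) ≠ 0) :
    Real.log (max ((|p + 3 * q| : ℝ) / 4) ((|p - q| : ℝ) / 4)) ≤
      height α + height (((q : ℂ) * α + (p : ℂ)) / (((p : ℂ) + 2 * (q : ℂ)) * α - (q : ℂ))) := by
  obtain ⟨hβ, hdeg⟩ := deg_eq p q hp α hD hα
  set β := ((q : ℂ) * α + (p : ℂ)) / (((p : ℂ) + 2 * (q : ℂ)) * α - (q : ℂ)) with hβdef
  have hcpos := max_pos' p q hq
  have harch := arch_main p q hq (intMinpoly α)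
  set c := max ((|p + 3 * q| : ℝ) / 4) ((|p - q| : ℝ) / 4) with hc
  set f := intMinpoly α with hf
  have hf0 : f ≠ 0 := (intMinpoly_isPrimitive α).ne_zero
  have hG0 := trG_ne_zero p q hq hp f hf0
  set G := trG p q f with hG
  have hn : f.natDegree = (minpoly ℚ α).natDegree := intMinpoly_natDegree α hα
  have hGdeg : G.natDegree ≤ f.natDegree := trG_natDegree_le p q f
  have hGroot : (G.map (Int.castRingHom ℂ)).eval β = 0 := by
    rw [hG, trG_map p q hq, eval_mul, eval_multiset_prod, Multiset.map_map]
    apply mul_eq_zero_of_right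
    rw [Multiset.prod_eq_zero_iff, Multiset.mem_map]
    refine ⟨α, ?_, ?_⟩
    · rw [mem_roots (by rwa [Polynomial.map_ne_zero_iff (RingHom.injective_int _)])]
      exact intMinpoly_root α hα
    · simp only [Function.comp, eval_add, eval_mul, eval_C, eval_X]
      have hβD : β * (((p : ℂ) + 2 * (q : ℂ)) * α - (q : ℂ)) = (q : ℂ) * α + p :=
        div_mul_cancel₀ _ hD
      linear_combination -hβD
  have hcont0 : G.content ≠ 0 := fun h => hG0 (content_eq_zero_iff.1 h)
  have hGeq : G.map (Int.castRingHom ℂ)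
      = C (G.content : ℂ) * G.primPart.map (Int.castRingHom ℂ) := by
    conv_lhs => rw [G.eq_C_content_mul_primPart]
    rw [Polynomial.map_mul, map_C]; rfl
  have hmm := mm_unique β hβ G.primPart (isPrimitive_primPart _) (by
      rw [hGeq, eval_mul, eval_C] at hGroot
      exact (mul_eq_zero.1 hGroot).resolve_left (by exact_mod_cast hcont0)) (by
      rw [natDegree_primPart, ← hdeg, ← hn]; exact hGdeg)
  have hMG : _root_.mahlerMeasure G = |(G.content : ℝ)| * _root_.mahlerMeasure (intMinpoly β) := by
    rw [← hmm, mm_eq G, hGeq, Polynomial.mahlerMeasure_mul, Polynomial.mahlerMeasure_const,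
      mm_eq]
    simp
  have hMpos : ∀ g : ℤ[X], g ≠ 0 → 0 < _root_.mahlerMeasure g := fun g hg => by
    rw [mm_eq]
    exact Polynomial.mahlerMeasure_pos_of_ne_zero
      (by rwa [Polynomial.map_ne_zero_iff (RingHom.injective_int _)])
  have hMf := hMpos f hf0
  have hMg := hMpos (intMinpoly β) (intMinpoly_isPrimitive β).ne_zero
  have he : f.eval 1 ≠ 0 := intMinpoly_eval_one α hα h1
  have hle : |(G.content : ℝ)| ≤ ((f.eval 1 : ℤ) : ℝ) ^ 2 := by
    have h2 := content_dvd p q hpq hq f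
    have h3 : |G.content| ≤ (f.eval 1) ^ 2 := Int.le_of_dvd (by positivity) ((abs_dvd _ _).2 h2)
    exact_mod_cast h3
  have hcR : 0 < |(G.content : ℝ)| := abs_pos.2 (by exact_mod_cast hcont0)
  have hfin : c ^ f.natDegree ≤ _root_.mahlerMeasure f * _root_.mahlerMeasure (intMinpoly β) := by
    rw [hMG] at harch
    have : c ^ f.natDegree * |(G.content : ℝ)| ≤
        (_root_.mahlerMeasure f * _root_.mahlerMeasure (intMinpoly β)) * |(G.content : ℝ)| :=
      calc _ ≤ c ^ f.natDegree * ((f.eval 1 : ℤ) : ℝ) ^ 2 := by gcongr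
        _ ≤ _ := harch
        _ = _ := by ring
    exact le_of_mul_le_mul_right this hcR
  have hlog := Real.log_le_log (by positivity) hfin
  rw [Real.log_pow, Real.log_mul hMf.ne' hMg.ne', hn] at hlog
  have hnpos : (0 : ℝ) < (minpoly ℚ α).natDegree := by
    exact_mod_cast minpoly.natDegree_pos hα.isIntegral
  rw [height, height, ← hdeg, ← add_div, le_div_iff₀ hnpos, mul_comm]
  exact hlog

lemma main_infinite (p q : ℤ) (hpq : IsCoprime p q) (hq : 0 < q) (α : ℂ)
    (hD : ((p : ℂ) + 2 * (q : ℂ)) * α - (q : ℂ) = 0) :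
    Real.log (max ((|p + 3 * q| : ℝ) / 4) ((|p - q| : ℝ) / 4)) ≤ height α := by
  have hqC : (q : ℂ) ≠ 0 := by exact_mod_cast hq.ne'
  have hm : p + 2 * q ≠ 0 := by
    intro h
    have h' : (p : ℂ) + 2 * q = 0 := by exact_mod_cast h
    rw [h'] at hD
    simp at hD
    omega
  have hmC : ((p + 2 * q : ℤ) : ℂ) ≠ 0 := by exact_mod_cast hm
  have hα : α = (q : ℂ) / ((p + 2 * q : ℤ) : ℂ) := by
    rw [eq_div_iff hmC]; push_cast; linear_combination hD
  have hcop : IsCoprime q (p + 2 * q) := by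
    obtain ⟨a, b, h⟩ := hpq
    exact ⟨b - 2 * a, a, by linear_combination h⟩
  rw [hα, height_rat_s10 q _ hcop hm]
  apply Real.log_le_log (max_pos' p q hq)
  push_cast
  have a1 := le_max_left |(q : ℝ)| |(p : ℝ) + 2 * q|
  have a2 := le_max_right |(q : ℝ)| |(p : ℝ) + 2 * q|
  have b1 : |(p : ℝ) + 3 * q| ≤ |(p : ℝ) + 2 * q| + |(q : ℝ)| := by
    rw [show (p : ℝ) + 3 * q = (p + 2 * q) + q by ring]; exact abs_add_le _ _
  have b2 : |(p : ℝ) - q| ≤ |(p : ℝ) + 2 * q| + 3 * |(q : ℝ)| := by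
    rw [show (p : ℝ) - q = (p + 2 * q) - 3 * q by ring]
    refine (abs_sub _ _).trans ?_
    rw [abs_mul]; simp
  have := abs_nonneg (q : ℝ)
  apply max_le <;> linarith

lemma main_eq (p q : ℤ) (hpq : IsCoprime p q) (hq : 0 < q) (h4 : 4 ∣ p - q) :
    height (-1 : ℂ) +
          height (((q : ℂ) * (-1) + (p : ℂ)) / (((p : ℂ) + 2 * (q : ℂ)) * (-1) - (q : ℂ)))
        = Real.log (max ((|p + 3 * q| : ℝ) / 4) ((|p - q| : ℝ) / 4)) := by
  have h0 : height (-1 : ℂ) = 0 := by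
    have := height_rat_s10 (-1) 1 isCoprime_one_right one_ne_zero
    simpa using this
  obtain ⟨A, hA⟩ := h4
  have hB : p + 3 * q = 4 * (A + q) := by linarith
  have hcop : IsCoprime (-A) (A + q) := by
    obtain ⟨a, b, h⟩ := hpq
    exact ⟨-(3 * a - b), a + b, by
      have hp : p = 4 * A + q := by linarith
      rw [hp] at h
      linear_combination h⟩
  have hAC : (p : ℂ) - q = 4 * A := by exact_mod_cast hA
  have hBC : (p : ℂ) + 3 * q = 4 * (A + q) := by exact_mod_cast hB
  have hAR : (p : ℝ) - q = 4 * A := by exact_mod_cast hA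
  have hBR : (p : ℝ) + 3 * q = 4 * (A + q) := by exact_mod_cast hB
  have harg : ((q : ℂ) * (-1) + (p : ℂ)) / (((p : ℂ) + 2 * (q : ℂ)) * (-1) - (q : ℂ))
      = ((-A : ℤ) : ℂ) / ((A + q : ℤ) : ℂ) := by
    rw [show (q : ℂ) * (-1) + (p : ℂ) = (-4) * ((-A : ℤ) : ℂ) by
        push_cast; linear_combination hAC,
      show ((p : ℂ) + 2 * (q : ℂ)) * (-1) - (q : ℂ) = (-4) * ((A + q : ℤ) : ℂ) by
        push_cast; linear_combination -hBC]
    rw [mul_div_mul_left _ _ (by norm_num)]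
  have hmax : max ((|p + 3 * q| : ℝ) / 4) ((|p - q| : ℝ) / 4)
      = max |((-A : ℤ) : ℝ)| |((A + q : ℤ) : ℝ)| := by
    rw [hAR, hBR, abs_mul, abs_mul, max_comm]
    push_cast
    rw [abs_neg]
    norm_num
  rw [h0, harg, zero_add, hmax]
  by_cases hz : A + q = 0
  · rw [hz] at hcop ⊢
    have hu : IsUnit (-A) := isCoprime_zero_right.1 hcop
    rcases Int.isUnit_iff.1 hu with h | h <;> simp [h, height_zero']
  · exact height_rat_s10 _ _ hcop hz

/-- Row 3 of Table 1: for `σ(z) = (qz + p)/((p + 2q)z - q)` (an involution fixing `1`)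
with `p, q` coprime, `q > 0`, `p ≠ -q`: for every algebraic `α ≠ 1` one has
`h(α) + h(σ(α)) ≥ log max(|p + 3q|/4, |p - q|/4)`, with equality at `α = -1`
when `4 ∣ p - q`. -/
theorem table1_row3 (p q : ℤ) (hpq : IsCoprime p q) (hq : 0 < q) (hp : p ≠ -q) :
    (∀ α : ℂ, IsAlgebraic ℚ α → α ≠ 1 →
      height α + height (((q : ℂ) * α + (p : ℂ)) / (((p : ℂ) + 2 * (q : ℂ)) * α - (q : ℂ)))
        ≥ Real.log (max ((|p + 3 * q| : ℝ) / 4) ((|p - q| : ℝ) / 4))) ∧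
    (4 ∣ p - q →
      height (-1 : ℂ) +
          height (((q : ℂ) * (-1) + (p : ℂ)) / (((p : ℂ) + 2 * (q : ℂ)) * (-1) - (q : ℂ)))
        = Real.log (max ((|p + 3 * q| : ℝ) / 4) ((|p - q| : ℝ) / 4))) := by
  refine ⟨fun α hα h1 => ?_, fun h4 => main_eq p q hpq hq h4⟩
  by_cases hD : ((p : ℂ) + 2 * (q : ℂ)) * α - (q : ℂ) = 0
  · rw [hD, div_zero, height_zero', add_zero]
    exact main_infinite p q hpq hq α hD
  · exact main_finite p q hpq hq hp α hα h1 hD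
end
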